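/- Let X = ℓ∞(ℕ,(n_i)) and for each i ∈ ℕ let A_i ⊆ ℝ^{n_i} be nonempty and closed. Assume A := X ∩ ∏_{i∈ℕ} A_i is nonempty. Then for every x ∈ X there exists y* ∈ A such that |x|_A = sup_{i∈ℕ} |x_i|_{A_i} = |x − y*|_∞; in particular the distance |x|_A equals the supremum of the componentwise distances and is attained. -/

import Mathlib

noncomputable section

section DistanceLemma

variable {E : ℕ → Type*} [∀ i, NormedAddCommGroup (E i)]

/-- Membership in `X = ℓ∞(ℕ,(n_i))`: a uniformly bounded sequence. -/
def Bdd (x : ∀ i, E i) : Prop :=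
  ∃ C : ℝ, ∀ i, ‖x i‖ ≤ C

/-- The sup norm `|x|_∞ = sup_i |x_i|`. -/
def supNorm (x : ∀ i, E i) : ℝ :=
  ⨆ i, ‖x i‖

/-- The set `A = X ∩ ∏_i A_i`. -/
def setA (A : ∀ i, Set (E i)) : Set (∀ i, E i) :=
  {y | Bdd y ∧ ∀ i, y i ∈ A i}

/-- The distance `|x|_A = inf_{y ∈ A} |x − y|_∞` from `x` to a set `A ⊆ X`. -/
def distA (x : ∀ i, E i) (A : Set (∀ i, E i)) : ℝ :=
  sInf ((fun y => supNorm (x - y)) '' A)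

/-- The distance from `x ∈ X` to `A = X ∩ ∏ A_i` equals `sup_i dist(x_i, A_i)` and is
attained at some `y* ∈ A`. -/
theorem stmt3
    [∀ i, NormedSpace ℝ (E i)] [∀ i, FiniteDimensional ℝ (E i)]
    (A : ∀ i, Set (E i)) (hne : ∀ i, (A i).Nonempty) (hcl : ∀ i, IsClosed (A i))
    (hA : (setA A).Nonempty) :
    ∀ x : ∀ i, E i, Bdd x → ∃ ystar ∈ setA A,
      distA x (setA A) = ⨆ i, Metric.infDist (x i) (A i) ∧
      distA x (setA A) = supNorm (x - ystar) := by
  intro x hx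
  obtain ⟨C, hC⟩ := hx
  obtain ⟨z, ⟨D, hD⟩, hz⟩ := hA
  have hex : ∀ i, ∃ y ∈ A i, Metric.infDist (x i) (A i) = dist (x i) y := by
    intro i
    haveI : ProperSpace (E i) := FiniteDimensional.proper ℝ (E i)
    exact (hcl i).exists_infDist_eq_dist (hne i) (x i)
  choose y hyA hy using hex
  have hyn : ∀ i, ‖x i - y i‖ = Metric.infDist (x i) (A i) := by
    intro i
    rw [hy i, dist_eq_norm]
  have hle : ∀ w : ∀ i, E i, (∀ i, w i ∈ A i) → ∀ i, ‖x i - y i‖ ≤ ‖x i - w i‖ := by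
    intro w hw i
    rw [hyn i, ← dist_eq_norm]
    exact Metric.infDist_le_dist_of_mem (hw i)
  have hyB : Bdd y := by
    refine ⟨C + (C + D), fun i => ?_⟩
    have h1 := hle z hz i
    have h2 := norm_sub_le (x i) (z i)
    have h3 := norm_sub_le (x i) (x i - y i)
    rw [sub_sub_cancel] at h3
    linarith [hC i, hD i]
  have hmem : y ∈ setA A := ⟨hyB, hyA⟩
  have hmin : distA x (setA A) = supNorm (x - y) := by
    have hl : IsLeast ((fun w => supNorm (x - w)) '' setA A) (supNorm (x - y)) := by
      refine ⟨⟨y, hmem, rfl⟩, ?_⟩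
      rintro _ ⟨w, ⟨⟨W, hW⟩, hw⟩, rfl⟩
      refine ciSup_mono ⟨C + W, ?_⟩ (fun i => hle w hw i)
      rintro _ ⟨i, rfl⟩
      exact (norm_sub_le (x i) (w i)).trans (add_le_add (hC i) (hW i))
    exact hl.csInf_eq
  refine ⟨y, hmem, ?_, hmin⟩
  rw [hmin]
  exact iSup_congr hyn

end DistanceLemma
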